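/- If the operator A has a nonzero fixed point in L_p(X,π)_+, then β ρ(K)^{1/θ} < 1. -/

import Mathlib

open MeasureTheory Filter Topology ENNReal

/-- The spectral radius of a bounded linear operator, via the Gelfand formula
`ρ(K) = lim_n ‖K^n‖^(1/n) = inf_{n ≥ 1} ‖K^n‖^(1/n)`. -/
noncomputable def specRad {E : Type*} [NormedAddCommGroup E] [NormedSpace ℝ E]
    (K : E →L[ℝ] E) : ℝ := ⨅ n : ℕ, ‖K ^ (n + 1)‖ ^ (1 / (n + 1) : ℝ)

/-!
With `s = 1 / θ`, the fixed point equation reads `g ^ s = ξ + β (K g) ^ s`. As `K g` stays between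
two positive constants and `ξ` is bounded below by a positive constant, it follows that
`(K g) ^ s ≤ q g ^ s` for some `q` with `β q < 1`. If `s > 0` this says `K g ≤ q ^ (1 / s) g`, if
`s < 0` it says `q ^ (1 / s) g ≤ K g`; the upper, respectively lower, Collatz–Wielandt bound for
positive operators then gives `ρ(K) ^ s ≤ q` in both cases. The upper bound requires
`|K f| ≤ C ‖f‖ g`, which follows from a Harnack inequality for the kernel of `K`.
-/

section SpectralRadius

variable {E : Type*} [NormedAddCommGroup E] [NormedSpace ℝ E] {K : E →L[ℝ] E} {l : ℝ}

theorem specRad_nonneg (K : E →L[ℝ] E) : 0 ≤ specRad K :=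
  Real.iInf_nonneg fun _ => by positivity

theorem specRad_le_norm_pow_rpow (K : E →L[ℝ] E) (n : ℕ) :
    specRad K ≤ ‖K ^ (n + 1)‖ ^ (1 / (n + 1) : ℝ) :=
  ciInf_le ⟨0, by rintro _ ⟨m, rfl⟩; positivity⟩ n

theorem pow_succ_rpow_one_div (hl : 0 ≤ l) (n : ℕ) : (l ^ (n + 1)) ^ (1 / (n + 1) : ℝ) = l := by
  simpa only [one_div, Nat.cast_add_one] using Real.pow_rpow_inv_natCast hl n.succ_ne_zero

theorem le_specRad_of_pow_le_norm_pow (hl : 0 ≤ l) (h : ∀ n : ℕ, l ^ (n + 1) ≤ ‖K ^ (n + 1)‖) :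
    l ≤ specRad K :=
  le_ciInf fun n => by
    rw [← pow_succ_rpow_one_div hl n]
    exact Real.rpow_le_rpow (by positivity) (h n) (by positivity)

theorem specRad_le_of_norm_pow_le {D : ℝ} (hl : 0 ≤ l)
    (h : ∀ n : ℕ, ‖K ^ (n + 1)‖ ≤ D * l ^ (n + 1)) : specRad K ≤ l := by
  have hD : 0 < max D 1 := by positivity
  have hle (n : ℕ) : specRad K ≤ max D 1 ^ (1 / (n + 1) : ℝ) * l := calc
    specRad K ≤ ‖K ^ (n + 1)‖ ^ (1 / (n + 1) : ℝ) := specRad_le_norm_pow_rpow K n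
    _ ≤ (max D 1 * l ^ (n + 1)) ^ (1 / (n + 1) : ℝ) := by
      have hn : ‖K ^ (n + 1)‖ ≤ max D 1 * l ^ (n + 1) :=
        (h n).trans (mul_le_mul_of_nonneg_right (le_max_left D 1) (by positivity))
      gcongr
    _ = max D 1 ^ (1 / (n + 1) : ℝ) * l := by
      rw [Real.mul_rpow hD.le (by positivity), pow_succ_rpow_one_div hl]
  have hroot : Tendsto (fun n : ℕ => max D 1 ^ (1 / (n + 1) : ℝ)) atTop (𝓝 (max D 1 ^ (0 : ℝ))) :=
    ((Real.continuous_const_rpow hD.ne').tendsto 0).comp tendsto_one_div_add_atTop_nhds_zero_nat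
  have hlim : Tendsto (fun n : ℕ => max D 1 ^ (1 / (n + 1) : ℝ) * l) atTop (𝓝 l) := by
    simpa only [Real.rpow_zero, one_mul] using hroot.mul_const l
  exact ge_of_tendsto' hlim hle

end SpectralRadius

section NormedLattice

variable {E : Type*} [NormedAddCommGroup E] [NormedSpace ℝ E] [Lattice E]
  {K : E →L[ℝ] E} {g : E} {l : ℝ}

theorem abs_apply_le_apply_abs (hK : Monotone K) (f : E) : |K f| ≤ K |f| :=
  abs_le'.2 ⟨hK (le_abs_self f), map_neg K f ▸ hK (neg_le_abs f)⟩

theorem monotone_pow (hK : Monotone K) (n : ℕ) : Monotone (K ^ n) := by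
  simpa only [FunLike.coe_pow_eq_iterate] using hK.iterate n

variable [PosSMulMono ℝ E]

theorem pow_apply_le_pow_smul (hK : Monotone K) (hl : 0 ≤ l) (hg : K g ≤ l • g) (n : ℕ) :
    (K ^ n) g ≤ l ^ n • g := by
  induction n with
  | zero => simp
  | succ n ih => calc
      (K ^ (n + 1)) g = (K ^ n) (K g) := by rw [pow_succ]; rfl
      _ ≤ (K ^ n) (l • g) := monotone_pow hK n hg
      _ = l • (K ^ n) g := map_smul _ _ _
      _ ≤ l • l ^ n • g := smul_le_smul_of_nonneg_left ih hl
      _ = l ^ (n + 1) • g := by rw [smul_smul, pow_succ']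

theorem pow_smul_le_pow_apply (hK : Monotone K) (hl : 0 ≤ l) (hg : l • g ≤ K g) (n : ℕ) :
    l ^ n • g ≤ (K ^ n) g := by
  induction n with
  | zero => simp
  | succ n ih => calc
      l ^ (n + 1) • g = l • l ^ n • g := by rw [smul_smul, pow_succ']
      _ ≤ l • (K ^ n) g := smul_le_smul_of_nonneg_left ih hl
      _ = (K ^ n) (l • g) := (map_smul _ _ _).symm
      _ ≤ (K ^ n) (K g) := monotone_pow hK n hg
      _ = (K ^ (n + 1)) g := by rw [pow_succ]; rfl

variable [HasSolidNorm E]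

theorem le_specRad_of_smul_le_apply [IsOrderedAddMonoid E] (hK : Monotone K) (hg0 : 0 ≤ g)
    (hg_ne : g ≠ 0) (hl : 0 ≤ l) (hg : l • g ≤ K g) : l ≤ specRad K := by
  refine le_specRad_of_pow_le_norm_pow hl fun n => ?_
  have hpow : 0 ≤ l ^ (n + 1) := by positivity
  have hnorm : l ^ (n + 1) * ‖g‖ ≤ ‖K ^ (n + 1)‖ * ‖g‖ := calc
    l ^ (n + 1) * ‖g‖ = ‖l ^ (n + 1) • g‖ := by rw [norm_smul, Real.norm_of_nonneg hpow]
    _ ≤ ‖(K ^ (n + 1)) g‖ := by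
      refine norm_le_norm_of_abs_le_abs ?_
      rw [abs_of_nonneg (smul_nonneg hpow hg0)]
      exact (pow_smul_le_pow_apply hK hl hg (n + 1)).trans (le_abs_self _)
    _ ≤ ‖K ^ (n + 1)‖ * ‖g‖ := (K ^ (n + 1)).le_opNorm g
  exact le_of_mul_le_mul_right hnorm (norm_pos_iff.2 hg_ne)

theorem specRad_le_of_apply_le_smul {C : ℝ} (hK : Monotone K) (hl : 0 < l) (hg : K g ≤ l • g)
    (hC : 0 ≤ C) (hgC : ∀ f, |K f| ≤ (C * ‖f‖) • g) : specRad K ≤ l := by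
  have habs (n : ℕ) (f : E) : |(K ^ (n + 1)) f| ≤ (C * ‖f‖) • l ^ n • g := calc
    |(K ^ (n + 1)) f| = |(K ^ n) (K f)| := by rw [pow_succ]; rfl
    _ ≤ (K ^ n) |K f| := abs_apply_le_apply_abs (monotone_pow hK n) (K f)
    _ ≤ (K ^ n) ((C * ‖f‖) • g) := monotone_pow hK n (hgC f)
    _ = (C * ‖f‖) • (K ^ n) g := map_smul _ _ _
    _ ≤ (C * ‖f‖) • l ^ n • g :=
      smul_le_smul_of_nonneg_left (pow_apply_le_pow_smul hK hl.le hg n) (by positivity)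
  refine specRad_le_of_norm_pow_le (D := C * ‖g‖ / l) hl.le fun n =>
    ContinuousLinearMap.opNorm_le_bound _ (by positivity) fun f => ?_
  calc ‖(K ^ (n + 1)) f‖ ≤ ‖(C * ‖f‖) • l ^ n • g‖ :=
        norm_le_norm_of_abs_le_abs ((habs n f).trans (le_abs_self _))
    _ = C * ‖f‖ * (l ^ n * ‖g‖) := by
        rw [norm_smul, norm_smul, Real.norm_of_nonneg (by positivity : 0 ≤ C * ‖f‖),
          Real.norm_of_nonneg (by positivity : 0 ≤ l ^ n)]
    _ = C * ‖g‖ / l * l ^ (n + 1) * ‖f‖ := by rw [pow_succ]; field_simp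

end NormedLattice

theorem le_inv_smul_withDensity {X : Type*} [MeasurableSpace X] (μ : Measure X) {f : X → ℝ≥0∞}
    {a : ℝ≥0∞} (ha : a ≠ 0) (ha' : a ≠ ∞) (haf : ∀ᵐ x ∂μ, a ≤ f x) :
    μ ≤ a⁻¹ • μ.withDensity f := calc
  μ = a⁻¹ • μ.withDensity fun _ => a := by
    rw [withDensity_const, smul_smul, ENNReal.inv_mul_cancel ha ha', one_smul]
  _ ≤ a⁻¹ • μ.withDensity f := by
    gcongr
    exact withDensity_mono haf

section Lp

variable {X : Type*} [MeasurableSpace X] {π : Measure X} {p : ℝ≥0∞}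

instance isOrderedModule_Lp : IsOrderedModule ℝ (Lp ℝ p π) :=
  .of_smul_nonneg fun c hc f hf => by
    rw [← Lp.coeFn_nonneg] at hf ⊢
    filter_upwards [hf, Lp.coeFn_smul c f] with x hfx hcfx
    rw [hcfx]
    exact mul_nonneg hc hfx

theorem ne_zero_of_ae_pos [NeZero π] {g : Lp ℝ p π} (hg : ∀ᵐ x ∂π, 0 < g x) : g ≠ 0 := by
  rintro rfl
  obtain ⟨x, hx, hx0⟩ := (hg.and (Lp.coeFn_zero ℝ p π)).exists
  exact hx.ne' hx0

variable [Fact (1 ≤ p)]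

theorem norm_smul_le_of_ae_mem_Icc {u v : Lp ℝ p π} {κ m n : ℝ} (hm : 0 ≤ m) (hn : 0 < n)
    (hu : ∀ᵐ x ∂π, u x ∈ Set.Icc m (κ * m)) (hv : ∀ᵐ x ∂π, v x ∈ Set.Icc n (κ * n)) :
    ‖v‖ • u ≤ (κ ^ 2 * ‖u‖) • v := by
  have hnorm : ‖m • v‖ ≤ (κ * n) * ‖u‖ := by
    refine Lp.norm_le_mul_norm_of_ae_le_mul ?_
    filter_upwards [hu, hv, Lp.coeFn_smul m v] with x hux hvx hmv
    have hvx0 : 0 ≤ v x := hn.le.trans hvx.1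
    have hux0 : 0 ≤ u x := hm.trans hux.1
    rw [hmv, Pi.smul_apply, smul_eq_mul, Real.norm_of_nonneg (by positivity),
      Real.norm_of_nonneg hux0, mul_comm]
    exact mul_le_mul hvx.2 hux.1 hm (hvx0.trans hvx.2)
  rw [norm_smul, Real.norm_of_nonneg hm] at hnorm
  rw [← Lp.coeFn_le]
  filter_upwards [hu, hv, Lp.coeFn_smul ‖v‖ u, Lp.coeFn_smul (κ ^ 2 * ‖u‖) v] with x hux hvx hl hr
  rw [hl, hr, Pi.smul_apply, Pi.smul_apply, smul_eq_mul, smul_eq_mul]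
  have hκ : 0 ≤ κ := nonneg_of_mul_nonneg_left (hn.le.trans (hvx.1.trans hvx.2)) hn
  calc ‖v‖ * u x ≤ ‖v‖ * (κ * m) := by gcongr; exact hux.2
    _ = κ * (m * ‖v‖) := by ring
    _ ≤ κ * (κ * n * ‖u‖) := by gcongr
    _ = κ ^ 2 * ‖u‖ * n := by ring
    _ ≤ κ ^ 2 * ‖u‖ * v x := by gcongr; exact hvx.1

/-- `K` is the integral operator on `Lp ℝ p π` with kernel `k` with respect to the reference
measure `μ`. Absolute continuity makes the integrals independent of the representative of `f`, and
integrability rules out the default value `0` of the Bochner integral. -/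
structure IsIntegralOperator (μ : Measure X) (k : X → X → ℝ) (K : Lp ℝ p π →L[ℝ] Lp ℝ p π) :
    Prop where
  absolutelyContinuous : μ ≪ π
  integrable : ∀ f : Lp ℝ p π, ∀ᵐ x ∂π, Integrable (fun y => k x y * f y) μ
  apply_ae_eq : ∀ f : Lp ℝ p π, K f =ᵐ[π] fun x => ∫ y, k x y * f y ∂μ

theorem isIntegralOperator_of_bounded [IsFiniteMeasure π] {μ : Measure X} {C : ℝ≥0∞} (hC : C ≠ ∞)
    (hμ : μ ≤ C • π) {k : X → X → ℝ} (hk_meas : ∀ x, AEStronglyMeasurable (k x) μ) {b : ℝ}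
    (hk_bdd : ∀ x y, ‖k x y‖ ≤ b) {K : Lp ℝ p π →L[ℝ] Lp ℝ p π}
    (hK : ∀ f : Lp ℝ p π, K f =ᵐ[π] fun x => ∫ y, k x y * f y ∂μ) : IsIntegralOperator μ k K where
  absolutelyContinuous := Measure.absolutelyContinuous_of_le_smul hμ
  integrable f := .of_forall fun x =>
    (((Lp.memLp f).integrable Fact.out).of_measure_le_smul hC hμ).bdd_mul (hk_meas x)
      (.of_forall (hk_bdd x))
  apply_ae_eq := hK

namespace IsIntegralOperator

variable {μ : Measure X} {k : X → X → ℝ} {K : Lp ℝ p π →L[ℝ] Lp ℝ p π} {g : Lp ℝ p π} {κ l s q : ℝ}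

theorem monotone (hK : IsIntegralOperator μ k K) (hk : ∀ x y, 0 ≤ k x y) : Monotone K := by
  intro u v huv
  rw [← Lp.coeFn_le] at huv ⊢
  filter_upwards [hK.apply_ae_eq u, hK.apply_ae_eq v, hK.integrable u, hK.integrable v]
    with x hux hvx hu_int hv_int
  rw [hux, hvx]
  refine integral_mono_ae hu_int hv_int ?_
  filter_upwards [hK.absolutelyContinuous.ae_le huv] with y hy
  exact mul_le_mul_of_nonneg_left hy (hk x y)

theorem apply_nonneg (hK : IsIntegralOperator μ k K) (hk : ∀ x y, 0 ≤ k x y) (hg : 0 ≤ g) :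
    0 ≤ K g := by
  simpa only [map_zero] using hK.monotone hk hg

theorem ae_apply_pos [NeZero μ] (hK : IsIntegralOperator μ k K) (hk : ∀ x y, 0 < k x y)
    (hg : ∀ᵐ x ∂π, 0 < g x) : ∀ᵐ x ∂π, 0 < K g x := by
  filter_upwards [hK.apply_ae_eq g, hK.integrable g] with x hx hint
  have hpos : ∀ᵐ y ∂μ, 0 < k x y * g y := by
    filter_upwards [hK.absolutelyContinuous.ae_le hg] with y hy using mul_pos (hk x y) hy
  have hsupp : Function.support (fun y => k x y * g y) =ᵐ[μ] Set.univ :=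
    eventuallyEq_univ.2 (hpos.mono fun _ => ne_of_gt)
  rw [hx, integral_pos_iff_support_of_nonneg_ae (hpos.mono fun _ => le_of_lt) hint,
    measure_congr hsupp]
  exact NeZero.pos (μ Set.univ)

theorem ae_ae_apply_le_mul_apply (hK : IsIntegralOperator μ k K)
    (hκ : ∀ x x' y, k x y ≤ κ * k x' y) (hg : 0 ≤ g) :
    ∀ᵐ x ∂π, ∀ᵐ x' ∂π, K g x ≤ κ * K g x' ∧ K g x' ≤ κ * K g x := by
  filter_upwards [hK.apply_ae_eq g, hK.integrable g] with x hx hint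
  filter_upwards [hK.apply_ae_eq g, hK.integrable g] with x' hx' hint'
  have hle (z z' : X) : ∀ᵐ y ∂μ, k z y * g y ≤ κ * (k z' y * g y) := by
    filter_upwards [hK.absolutelyContinuous.ae_le ((Lp.coeFn_nonneg g).2 hg)] with y hy
    simpa only [mul_assoc] using mul_le_mul_of_nonneg_right (hκ z z' y) hy
  rw [hx, hx', ← integral_const_mul, ← integral_const_mul]
  exact ⟨integral_mono_ae hint (hint'.const_mul κ) (hle x x'),
    integral_mono_ae hint' (hint.const_mul κ) (hle x' x)⟩

theorem neZero [NeZero μ] (hK : IsIntegralOperator μ k K) : NeZero π :=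
  ⟨fun h => NeZero.ne μ (Measure.absolutelyContinuous_zero_iff.1 (h ▸ hK.absolutelyContinuous))⟩

theorem exists_ae_apply_mem_Icc [NeZero π] (hK : IsIntegralOperator μ k K)
    (hk : ∀ x y, 0 < k x y) (hκ : ∀ x x' y, k x y ≤ κ * k x' y) (hg : 0 ≤ g) :
    ∃ m, 0 ≤ m ∧ ∀ᵐ x ∂π, K g x ∈ Set.Icc m (κ ^ 2 * m) := by
  have hnonneg : ∀ᵐ x ∂π, 0 ≤ K g x :=
    (Lp.coeFn_nonneg _).2 (hK.apply_nonneg (fun x y => (hk x y).le) hg)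
  obtain ⟨x₀, hx₀, hharnack⟩ := (hnonneg.and (hK.ae_ae_apply_le_mul_apply hκ hg)).exists
  have hκ0 : 0 < κ := pos_of_mul_pos_left ((hk x₀ x₀).trans_le (hκ x₀ x₀ x₀)) (hk x₀ x₀).le
  refine ⟨K g x₀ / κ, by positivity, ?_⟩
  filter_upwards [hharnack] with x hx
  refine ⟨(div_le_iff₀' hκ0).2 hx.1, ?_⟩
  calc K g x ≤ κ * K g x₀ := hx.2
    _ = κ ^ 2 * (K g x₀ / κ) := by field_simp

theorem exists_pos_ae_apply_mem_Icc [NeZero μ] (hK : IsIntegralOperator μ k K)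
    (hk : ∀ x y, 0 < k x y) (hκ : ∀ x x' y, k x y ≤ κ * k x' y) (hg : ∀ᵐ x ∂π, 0 < g x) :
    ∃ m, 0 < m ∧ ∀ᵐ x ∂π, K g x ∈ Set.Icc m (κ ^ 2 * m) := by
  have := hK.neZero
  obtain ⟨m, -, hm⟩ := hK.exists_ae_apply_mem_Icc hk hκ
    ((Lp.coeFn_nonneg g).1 (hg.mono fun _ => le_of_lt))
  obtain ⟨x, hpos, hmem⟩ := ((hK.ae_apply_pos hk hg).and hm).exists
  exact ⟨m, pos_of_mul_pos_right (hpos.trans_le hmem.2) (sq_nonneg κ), hm⟩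

theorem exists_abs_apply_le_smul_apply [NeZero μ] (hK : IsIntegralOperator μ k K)
    (hk : ∀ x y, 0 < k x y) (hκ : ∀ x x' y, k x y ≤ κ * k x' y) (hg : ∀ᵐ x ∂π, 0 < g x) :
    ∃ C, 0 ≤ C ∧ ∀ f, |K f| ≤ (C * ‖f‖) • K g := by
  have := hK.neZero
  have hmono : Monotone K := hK.monotone fun x y => (hk x y).le
  have hKg0 : 0 ≤ K g := (Lp.coeFn_nonneg _).1 ((hK.ae_apply_pos hk hg).mono fun _ => le_of_lt)
  have hKg : 0 < ‖K g‖ := norm_pos_iff.2 (ne_zero_of_ae_pos (hK.ae_apply_pos hk hg))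
  obtain ⟨n, hn, hKg_mem⟩ := hK.exists_pos_ae_apply_mem_Icc hk hκ hg
  refine ⟨‖K g‖⁻¹ * ((κ ^ 2) ^ 2 * ‖K‖), by positivity, fun f => ?_⟩
  obtain ⟨m, hm, hKf_mem⟩ := hK.exists_ae_apply_mem_Icc hk hκ (abs_nonneg f)
  have hKf : ‖K |f|‖ ≤ ‖K‖ * ‖f‖ := norm_abs_eq_norm f ▸ K.le_opNorm |f|
  calc |K f| ≤ K |f| := abs_apply_le_apply_abs hmono f
    _ = ‖K g‖⁻¹ • ‖K g‖ • K |f| := (inv_smul_smul₀ hKg.ne' _).symm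
    _ ≤ ‖K g‖⁻¹ • ((κ ^ 2) ^ 2 * ‖K |f|‖) • K g :=
      smul_le_smul_of_nonneg_left (norm_smul_le_of_ae_mem_Icc hm hn hKf_mem hKg_mem)
        (by positivity)
    _ ≤ ‖K g‖⁻¹ • ((κ ^ 2) ^ 2 * (‖K‖ * ‖f‖)) • K g := by gcongr
    _ = (‖K g‖⁻¹ * ((κ ^ 2) ^ 2 * ‖K‖) * ‖f‖) • K g := by rw [smul_smul]; congr 1; ring

theorem specRad_le [NeZero μ] (hK : IsIntegralOperator μ k K) (hk : ∀ x y, 0 < k x y)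
    (hκ : ∀ x x' y, k x y ≤ κ * k x' y) (hg : ∀ᵐ x ∂π, 0 < g x) (hl : 0 < l)
    (hle : ∀ᵐ x ∂π, K g x ≤ l * g x) : specRad K ≤ l := by
  have hKg : K g ≤ l • g := by
    rw [← Lp.coeFn_le]
    filter_upwards [hle, Lp.coeFn_smul l g] with x hx hlx
    rwa [hlx]
  obtain ⟨C, hC, hKC⟩ := hK.exists_abs_apply_le_smul_apply hk hκ hg
  refine specRad_le_of_apply_le_smul (C := C * l) (hK.monotone fun x y => (hk x y).le) hl hKg
    (by positivity) fun f => ?_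
  calc |K f| ≤ (C * ‖f‖) • K g := hKC f
    _ ≤ (C * ‖f‖) • l • g := smul_le_smul_of_nonneg_left hKg (by positivity)
    _ = (C * l * ‖f‖) • g := by rw [smul_smul]; congr 1; ring

theorem le_specRad [NeZero π] (hK : IsIntegralOperator μ k K) (hk : ∀ x y, 0 ≤ k x y)
    (hg : ∀ᵐ x ∂π, 0 < g x) (hl : 0 ≤ l) (hle : ∀ᵐ x ∂π, l * g x ≤ K g x) : l ≤ specRad K := by
  have hKg : l • g ≤ K g := by
    rw [← Lp.coeFn_le]
    filter_upwards [hle, Lp.coeFn_smul l g] with x hx hlx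
    rwa [hlx]
  exact le_specRad_of_smul_le_apply (hK.monotone hk)
    ((Lp.coeFn_nonneg g).1 (hg.mono fun _ => le_of_lt)) (ne_zero_of_ae_pos hg) hl hKg

theorem specRad_rpow_le [NeZero μ] (hK : IsIntegralOperator μ k K) (hk : ∀ x y, 0 < k x y)
    (hκ : ∀ x x' y, k x y ≤ κ * k x' y) (hg : ∀ᵐ x ∂π, 0 < g x) (hs : s ≠ 0) (hq : 0 < q)
    (hle : ∀ᵐ x ∂π, K g x ^ s ≤ q * g x ^ s) : specRad K ^ s ≤ q := by
  have := hK.neZero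
  have hl : 0 < q ^ s⁻¹ := by positivity
  have hle' : ∀ᵐ x ∂π, 0 < g x ∧ 0 < K g x ∧ K g x ^ s ≤ (q ^ s⁻¹ * g x) ^ s := by
    filter_upwards [hle, hg, hK.ae_apply_pos hk hg] with x hx hgx hKgx
    rw [Real.mul_rpow hl.le hgx.le, Real.rpow_inv_rpow hq.le hs]
    exact ⟨hgx, hKgx, hx⟩
  rcases hs.lt_or_gt with hs | hs
  · have hle_specRad : q ^ s⁻¹ ≤ specRad K := by
      refine hK.le_specRad (fun x y => (hk x y).le) hg hl.le ?_
      filter_upwards [hle'] with x ⟨hgx, hKgx, hx⟩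
      exact (Real.rpow_le_rpow_iff_of_neg hKgx (by positivity) hs).1 hx
    exact (Real.rpow_inv_le_iff_of_neg hq (hl.trans_le hle_specRad) hs).1 hle_specRad
  · have hspecRad_le : specRad K ≤ q ^ s⁻¹ := by
      refine hK.specRad_le hk hκ hg hl ?_
      filter_upwards [hle'] with x ⟨hgx, hKgx, hx⟩
      exact (Real.rpow_le_rpow_iff hKgx.le (by positivity) hs).1 hx
    exact (Real.le_rpow_inv_iff_of_pos (specRad_nonneg K) hq.le hs).1 hspecRad_le

end IsIntegralOperator

end Lp

theorem rpow_le_max_of_mem_Icc {a b t : ℝ} (ha : 0 < a) (ht : t ∈ Set.Icc a b) (s : ℝ) :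
    t ^ s ≤ max (a ^ s) (b ^ s) := by
  rcases le_total 0 s with hs | hs
  · exact (Real.rpow_le_rpow (ha.le.trans ht.1) ht.2 hs).trans (le_max_right _ _)
  · exact (Real.rpow_le_rpow_of_nonpos ha ht.1 hs).trans (le_max_left _ _)

theorem exists_pos_forall_le_mul_add {β c T : ℝ} (hβ : 0 < β) (hc : 0 < c) (hT : 0 < T) :
    ∃ q, 0 < q ∧ β * q < 1 ∧ ∀ t ≤ T, ∀ s ≥ c, t ≤ q * (s + β * t) := by
  have hden : 0 < c + β * T := by positivity
  have hβq : β * (T / (c + β * T)) < 1 := by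
    rw [← mul_div_assoc, div_lt_one hden]
    linarith
  refine ⟨T / (c + β * T), by positivity, hβq, fun t ht s hs => ?_⟩
  rw [div_mul_eq_mul_div, le_div_iff₀ hden]
  calc t * (c + β * T) = t * c + T * (β * t) := by ring
    _ ≤ T * s + T * (β * t) := by gcongr
    _ = T * (s + β * t) := by ring

theorem necessity_of_spectral_condition_general {X : Type*} [MeasurableSpace X] {μ π : Measure X}
    [NeZero μ] {p : ℝ≥0∞} [Fact (1 ≤ p)] {k : X → X → ℝ} (hk : ∀ x y, 0 < k x y) {κ : ℝ}
    (hκ : ∀ x x' y, k x y ≤ κ * k x' y) {K : Lp ℝ p π →L[ℝ] Lp ℝ p π}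
    (hK : IsIntegralOperator μ k K) {β θ c : ℝ} (hβ : 0 < β) (hθ : θ ≠ 0) (hc : 0 < c)
    {ξ : X → ℝ} (hξ : ∀ᵐ x ∂π, c ≤ ξ x) {g : Lp ℝ p π} (hg : ∀ᵐ x ∂π, 0 < g x)
    (hfix : g =ᵐ[π] fun x => (ξ x + β * K g x ^ (1 / θ)) ^ θ) :
    β * specRad K ^ (1 / θ) < 1 := by
  obtain ⟨m, hm, hKg⟩ := hK.exists_pos_ae_apply_mem_Icc hk hκ hg
  obtain ⟨q, hq, hβq, hratio⟩ := exists_pos_forall_le_mul_add hβ hc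
    (by positivity : 0 < max (m ^ (1 / θ)) ((κ ^ 2 * m) ^ (1 / θ)))
  have hle : ∀ᵐ x ∂π, K g x ^ (1 / θ) ≤ q * g x ^ (1 / θ) := by
    filter_upwards [hKg, hξ, hfix] with x hKgx hξx hgx
    have hKgx0 : 0 < K g x := hm.trans_le hKgx.1
    have hξx0 : 0 < ξ x := hc.trans_le hξx
    have hlin : g x ^ (1 / θ) = ξ x + β * K g x ^ (1 / θ) := by
      rw [hgx, one_div, Real.rpow_rpow_inv (by positivity) hθ]
    rw [hlin]
    exact hratio _ (rpow_le_max_of_mem_Icc hm hKgx _) _ hξx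
  calc β * specRad K ^ (1 / θ) ≤ β * q := by
        gcongr
        exact hK.specRad_rpow_le hk hκ hg (one_div_ne_zero hθ) hq hle
    _ < 1 := hβq

section CompactSpace

variable {X : Type*} [TopologicalSpace X] [CompactSpace X]

theorem exists_pos_forall_le_of_continuous_pos {f : X → ℝ} (hf : Continuous f)
    (hpos : ∀ x, 0 < f x) : ∃ a, 0 < a ∧ ∀ x, a ≤ f x := by
  simpa only [Set.mem_univ, true_imp_iff] using
    isCompact_univ.exists_forall_le' hf.continuousOn fun x _ => hpos x

theorem exists_forall_le_mul_of_continuous_pos {f : X → ℝ} (hf : Continuous f)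
    (hpos : ∀ x, 0 < f x) : ∃ κ, ∀ x x', f x ≤ κ * f x' := by
  obtain ⟨a, ha, haf⟩ := exists_pos_forall_le_of_continuous_pos hf hpos
  obtain ⟨b, hfb⟩ := (isCompact_range hf).bddAbove
  replace hfb (x : X) : f x ≤ b := hfb ⟨x, rfl⟩
  refine ⟨b / a, fun x x' => ?_⟩
  have hb : 0 ≤ b := (hpos x).le.trans (hfb x)
  calc f x ≤ b := hfb x
    _ = b / a * a := (div_mul_cancel₀ b ha.ne').symm
    _ ≤ b / a * f x' := by gcongr; exact haf x'

theorem isIntegralOperator_of_continuous [MeasurableSpace X] [OpensMeasurableSpace X]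
    {μ : Measure X} {d : X → ℝ} [IsFiniteMeasure (μ.withDensity fun x => .ofReal (d x))]
    (hd : Continuous d) (hd_pos : ∀ x, 0 < d x) {p : ℝ≥0∞} [Fact (1 ≤ p)] {k : X → X → ℝ}
    (hk : Continuous (Function.uncurry k))
    {K : Lp ℝ p (μ.withDensity fun x => .ofReal (d x)) →L[ℝ]
      Lp ℝ p (μ.withDensity fun x => .ofReal (d x))}
    (hK : ∀ f, K f =ᵐ[μ.withDensity fun x => .ofReal (d x)] fun x => ∫ y, k x y * f y ∂μ) :
    IsIntegralOperator μ k K := by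
  obtain ⟨a, ha, had⟩ := exists_pos_forall_le_of_continuous_pos hd hd_pos
  obtain ⟨b, hkb⟩ := isCompact_univ.exists_bound_of_continuousOn hk.continuousOn
  have ha' : ENNReal.ofReal a ≠ 0 := (ENNReal.ofReal_pos.2 ha).ne'
  exact isIntegralOperator_of_bounded (ENNReal.inv_ne_top.2 ha')
    (le_inv_smul_withDensity μ ha' ENNReal.ofReal_ne_top
      (.of_forall fun x => ENNReal.ofReal_le_ofReal (had x)))
    (fun x => (hk.comp (.prodMk_right x)).aestronglyMeasurable)
    (fun x y => hkb (x, y) (Set.mem_univ _)) hK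

end CompactSpace

/-- **Necessity.**  In the compact-state-space setting, if the Epstein–Zin
operator `(A g)(x) = (ξ(x) + β (K g(x))^(1/θ))^θ` has a nonzero fixed point in
the cone `L_p(X,π)_+` of a.e. strictly positive functions, then
`β ρ(K)^(1/θ) < 1`. -/
theorem necessity_of_spectral_condition
    {X : Type*} [MetricSpace X] [CompactSpace X] [MeasurableSpace X] [BorelSpace X]
    (μ π : Measure X) [IsFiniteMeasure μ] [μ.IsOpenPosMeasure] [IsProbabilityMeasure π]
    (d : X → ℝ) (hd_cont : Continuous d) (hd_pos : ∀ x, 0 < d x)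
    (hπ : π = μ.withDensity (fun x => ENNReal.ofReal (d x)))
    (p : ℝ≥0∞) [Fact (1 ≤ p)] (hp_top : p ≠ ⊤)
    (k : X → X → ℝ) (hk_cont : Continuous (Function.uncurry k))
    (hk_pos : ∀ x y, 0 < k x y)
    (K : Lp ℝ p π →L[ℝ] Lp ℝ p π)
    (hK : ∀ g : Lp ℝ p π, (K g : X → ℝ) =ᵐ[π] fun x => ∫ y, k x y * g y ∂μ)
    (β θ : ℝ) (hβ0 : 0 < β) (hβ1 : β < 1) (hθ : θ ≠ 0)
    (ξ : X → ℝ) (hξ_cont : Continuous ξ) (hξ_pos : ∀ x, 0 < ξ x)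
    (A : Lp ℝ p π → Lp ℝ p π)
    (hA : ∀ g : Lp ℝ p π, (∀ᵐ x ∂π, 0 < g x) →
      (A g : X → ℝ) =ᵐ[π] fun x => (ξ x + β * ((K g : X → ℝ) x) ^ (1 / θ)) ^ θ)
    (hfix : ∃ g : Lp ℝ p π, g ≠ 0 ∧ (∀ᵐ x ∂π, 0 < g x) ∧ A g = g) :
    β * specRad K ^ (1 / θ) < 1 := by
  have : NeZero μ :=
    ⟨by rintro rfl; exact IsProbabilityMeasure.ne_zero π (hπ.trans (withDensity_zero_left _))⟩
  subst hπ
  obtain ⟨κ, hκ⟩ := exists_forall_le_mul_of_continuous_pos hk_cont fun z => hk_pos z.1 z.2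
  obtain ⟨c, hc, hcξ⟩ := exists_pos_forall_le_of_continuous_pos hξ_cont hξ_pos
  obtain ⟨g, -, hg, hAg⟩ := hfix
  have hK_int := isIntegralOperator_of_continuous hd_cont hd_pos hk_cont hK
  have hg_fix := hA g hg
  rw [hAg] at hg_fix
  exact necessity_of_spectral_condition_general hk_pos (fun x x' y => hκ (x, y) (x', y)) hK_int
    hβ0 hθ hc (.of_forall hcξ) hg hg_fix
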